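/- For all integers m ≥ 1 and n ≥ 1, p^{ed}_{od}(m,2n-1) - p^{ed}_{od}(m,2n) = D_o(m,2n-1); equivalently, p^{ed}_{od}(m,2n) + D_o(m,2n-1) = p^{ed}_{od}(m,2n-1). -/

import Mathlib

/-- Number of partitions of `n` into exactly `m` distinct parts in which
every odd part is smaller than every even part and at least one odd part occurs. -/
noncomputable def pedOd (m n : ℕ) : ℕ :=
  Nat.card {π : n.Partition // π.parts.Nodup ∧ Multiset.card π.parts = m ∧
    (∀ a ∈ π.parts, ∀ b ∈ π.parts, Odd a → Even b → a < b) ∧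
    (∃ a ∈ π.parts, Odd a)}

/-- Number of partitions of `n` into exactly `m` distinct odd parts. -/
noncomputable def Dodd (m n : ℕ) : ℕ :=
  Nat.card {π : n.Partition // π.parts.Nodup ∧ Multiset.card π.parts = m ∧
    ∀ a ∈ π.parts, Odd a}

/-!
Regard a partition into distinct parts as a finite set of positive integers. If all odd elements of
a set lie below all its even elements, then lowering its largest odd element `e + 1` to `e` turns
`e` into its smallest even element, and raising the smallest even element undoes this. For a set of
odd sum, removing an even element leaves an odd one behind, so between sums `N + 1` and `N` with `N`
odd the correspondence only misses the sets of sum `N` without even elements.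
-/

/-- The partitions of `n` into `m` distinct parts, encoded as the sets of their parts. -/
def distinctPartitions (m n : ℕ) : Set (Finset ℕ) :=
  {s | 0 ∉ s ∧ s.card = m ∧ ∑ x ∈ s, x = n}

/-- The parity order of the partitions counted by `pedOd`: odd elements precede even ones. -/
def OddsBelowEvens (s : Finset ℕ) : Prop :=
  ∀ a ∈ s, ∀ b ∈ s, Odd a → Even b → a < b

/-- `e` is a cut of `t` if `e` is even and the consecutive pair `e`, `e + 1` separates the odd
elements of `t`, which lie below it, from the even ones, which lie above it. Inserting `e` or
`e + 1` into `t` then produces the two sides of the correspondence. -/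
structure IsParityCut (e : ℕ) (t : Finset ℕ) : Prop where
  even : Even e
  lt_of_odd : ∀ x ∈ t, Odd x → x < e
  lt_of_even : ∀ x ∈ t, Even x → e + 1 < x

theorem finite_distinctPartitions (m n : ℕ) : (distinctPartitions m n).Finite := by
  refine (Finset.range (n + 1)).powerset.finite_toSet.subset ?_
  rintro s ⟨-, -, hsum⟩
  simp only [Finset.coe_powerset, Set.mem_preimage, Set.mem_powerset_iff, Finset.coe_subset]
  intro x hx
  have hle : x ≤ ∑ y ∈ s, y := Finset.single_le_sum_of_canonicallyOrdered (f := id) hx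
  exact Finset.mem_range.2 (by omega)

theorem card_nodup_partition_eq_ncard (m n : ℕ) (Q : Multiset ℕ → Prop) :
    Nat.card {π : n.Partition // π.parts.Nodup ∧ Multiset.card π.parts = m ∧ Q π.parts} =
      {s ∈ distinctPartitions m n | Q s.val}.ncard := by
  refine Nat.card_congr
    { toFun := fun π => ⟨⟨π.1.parts, π.2.1⟩, ⟨fun h0 => ?_, π.2.2.1, ?_⟩, π.2.2.2⟩
      invFun := fun s => ⟨⟨s.1.val, fun {i} hi => ?_, ?_⟩, s.1.nodup, s.2.1.2.1, s.2.2⟩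
      left_inv := fun _ => rfl
      right_inv := fun _ => rfl }
  · exact (π.1.parts_pos h0).false
  · simpa only [Finset.sum, Multiset.map_id'] using π.1.parts_sum
  · exact Nat.pos_of_ne_zero fun h0 => s.2.1.1 (h0 ▸ hi)
  · simpa only [Finset.sum, Multiset.map_id'] using s.2.1.2.2

theorem pedOd_eq_ncard (m n : ℕ) :
    pedOd m n = {s ∈ distinctPartitions m n | OddsBelowEvens s ∧ ∃ a ∈ s, Odd a}.ncard :=
  card_nodup_partition_eq_ncard m n fun p =>
    (∀ a ∈ p, ∀ b ∈ p, Odd a → Even b → a < b) ∧ ∃ a ∈ p, Odd a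

theorem Dodd_eq_ncard (m n : ℕ) :
    Dodd m n = {s ∈ distinctPartitions m n | ∀ a ∈ s, Odd a}.ncard :=
  card_nodup_partition_eq_ncard m n fun p => ∀ a ∈ p, Odd a

theorem exists_odd_of_odd_sum {ι : Type*} {s : Finset ι} {f : ι → ℕ} (h : Odd (∑ i ∈ s, f i)) :
    ∃ i ∈ s, Odd (f i) := by
  by_contra! hs
  exact Nat.not_even_iff_odd.2 h
    (Finset.even_sum f fun i hi => Nat.not_odd_iff_even.1 (hs i hi))

theorem insert_succ_mem_distinctPartitions_iff {m n a : ℕ} {t : Finset ℕ} (ha : a ≠ 0) (hat : a ∉ t)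
    (hat' : a + 1 ∉ t) :
    insert (a + 1) t ∈ distinctPartitions m (n + 1) ↔ insert a t ∈ distinctPartitions m n := by
  simp only [distinctPartitions, Set.mem_ofPred_eq, Finset.mem_insert, Finset.sum_insert hat,
    Finset.sum_insert hat', Finset.card_insert_of_notMem hat, Finset.card_insert_of_notMem hat']
  grind

namespace IsParityCut

variable {e : ℕ} {t : Finset ℕ}

theorem notMem (h : IsParityCut e t) : e ∉ t := fun he => by
  have := h.lt_of_even e he h.even
  omega

theorem succ_notMem (h : IsParityCut e t) : e + 1 ∉ t := fun he => by
  have := h.lt_of_odd _ he h.even.add_one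
  omega

theorem isLeast_even (h : IsParityCut e t) : IsLeast {x | x ∈ insert e t ∧ Even x} e := by
  refine ⟨⟨Finset.mem_insert_self e t, h.even⟩, ?_⟩
  rintro x ⟨hx, hxe⟩
  obtain rfl | hxt := Finset.mem_insert.1 hx
  · exact le_rfl
  · have := h.lt_of_even x hxt hxe
    omega

theorem isGreatest_odd (h : IsParityCut e t) :
    IsGreatest {x | x ∈ insert (e + 1) t ∧ Odd x} (e + 1) := by
  refine ⟨⟨Finset.mem_insert_self _ t, h.even.add_one⟩, ?_⟩
  rintro x ⟨hx, hxo⟩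
  obtain rfl | hxt := Finset.mem_insert.1 hx
  · exact le_rfl
  · exact (h.lt_of_odd x hxt hxo).le.trans e.le_succ

theorem oddsBelowEvens_insert (h : IsParityCut e t) : OddsBelowEvens (insert e t) := by
  intro a ha b hb hao hbe
  obtain rfl | hat := Finset.mem_insert.1 ha
  · exact absurd h.even (Nat.not_even_iff_odd.2 hao)
  · exact (h.lt_of_odd a hat hao).trans_le (h.isLeast_even.2 ⟨hb, hbe⟩)

theorem oddsBelowEvens_insert_succ (h : IsParityCut e t) : OddsBelowEvens (insert (e + 1) t) := by
  intro a ha b hb hao hbe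
  obtain rfl | hbt := Finset.mem_insert.1 hb
  · exact absurd h.even.add_one (Nat.not_odd_iff_even.2 hbe)
  · exact (h.isGreatest_odd.2 ⟨ha, hao⟩).trans_lt (h.lt_of_even b hbt hbe)

theorem ne_zero_of_odd_sum (h : IsParityCut e t) (hsum : Odd (∑ x ∈ t, x)) : e ≠ 0 := by
  obtain ⟨a, hat, hao⟩ := exists_odd_of_odd_sum hsum
  exact (h.lt_of_odd a hat hao).ne_bot

-- The cut `e = 0` would make `0` a part of `insert e t`; parity of the sum excludes it.
theorem insert_succ_mem_iff {m N : ℕ} (h : IsParityCut e t) (hN : Odd N) :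
    insert (e + 1) t ∈ distinctPartitions m (N + 1) ↔ insert e t ∈ distinctPartitions m N := by
  have ne_zero (hsum : e + ∑ x ∈ t, x = N) : e ≠ 0 := by
    rw [← hsum] at hN
    exact h.ne_zero_of_odd_sum ((Nat.odd_add'.1 hN).2 h.even)
  constructor <;> intro hs
  · have hsum := hs.2.2
    rw [Finset.sum_insert h.succ_notMem] at hsum
    have he : e ≠ 0 := ne_zero (by omega)
    exact (insert_succ_mem_distinctPartitions_iff he h.notMem h.succ_notMem).1 hs
  · have hsum := hs.2.2
    rw [Finset.sum_insert h.notMem] at hsum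
    have he : e ≠ 0 := ne_zero hsum
    exact (insert_succ_mem_distinctPartitions_iff he h.notMem h.succ_notMem).2 hs

end IsParityCut

namespace OddsBelowEvens

variable {s : Finset ℕ} {e : ℕ}

theorem isParityCut_erase (hs : OddsBelowEvens s) (he : IsLeast {x | x ∈ s ∧ Even x} e) :
    IsParityCut e (s.erase e) where
  even := he.1.2
  lt_of_odd x hx hxo := hs x (Finset.mem_of_mem_erase hx) e he.1.1 hxo he.1.2
  lt_of_even x hx hxe := by
    have hle : e ≤ x := he.2 ⟨Finset.mem_of_mem_erase hx, hxe⟩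
    have hne : x ≠ e := Finset.ne_of_mem_erase hx
    have heven : Even e := he.1.2
    grind

theorem isParityCut_erase_succ (hs : OddsBelowEvens s)
    (he : IsGreatest {x | x ∈ s ∧ Odd x} (e + 1)) : IsParityCut e (s.erase (e + 1)) where
  even := by simpa [Nat.odd_add_one] using he.1.2
  lt_of_odd x hx hxo := by
    have hle : x ≤ e + 1 := he.2 ⟨Finset.mem_of_mem_erase hx, hxo⟩
    have hne : x ≠ e + 1 := Finset.ne_of_mem_erase hx
    have hodd : Odd (e + 1) := he.1.2
    grind
  lt_of_even x hx hxe := hs (e + 1) he.1.1 x (Finset.mem_of_mem_erase hx) he.1.2 hxe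

end OddsBelowEvens

theorem bijOn_insert_isParityCut :
    Set.BijOn (fun p : ℕ × Finset ℕ => insert p.1 p.2) {p | IsParityCut p.1 p.2}
      {s | OddsBelowEvens s ∧ ∃ b ∈ s, Even b} := by
  refine ⟨?mapsTo, ?injOn, ?surjOn⟩
  case mapsTo =>
    exact fun p hp => ⟨hp.oddsBelowEvens_insert, p.1, hp.isLeast_even.1⟩
  case injOn =>
    rintro ⟨e, t⟩ (h : IsParityCut e t) ⟨e', t'⟩ (h' : IsParityCut e' t')
      (heq : insert e t = insert e' t')
    obtain rfl : e = e' := h.isLeast_even.unique (heq ▸ h'.isLeast_even)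
    rw [← Finset.erase_insert h.notMem, heq, Finset.erase_insert h'.notMem]
  case surjOn =>
    rintro s ⟨hs, b, hb, hbe⟩
    have he : IsLeast {x | x ∈ s ∧ Even x} (sInf {x | x ∈ s ∧ Even x}) :=
      ⟨Nat.sInf_mem ⟨b, hb, hbe⟩, fun _ hx => Nat.sInf_le hx⟩
    exact ⟨(_, _), hs.isParityCut_erase he, Finset.insert_erase he.1.1⟩

theorem bijOn_insert_succ_isParityCut :
    Set.BijOn (fun p : ℕ × Finset ℕ => insert (p.1 + 1) p.2) {p | IsParityCut p.1 p.2}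
      {s | OddsBelowEvens s ∧ ∃ a ∈ s, Odd a} := by
  refine ⟨?mapsTo, ?injOn, ?surjOn⟩
  case mapsTo =>
    exact fun p hp => ⟨hp.oddsBelowEvens_insert_succ, p.1 + 1, hp.isGreatest_odd.1⟩
  case injOn =>
    rintro ⟨e, t⟩ (h : IsParityCut e t) ⟨e', t'⟩ (h' : IsParityCut e' t')
      (heq : insert (e + 1) t = insert (e' + 1) t')
    obtain rfl : e = e' :=
      Nat.succ_injective (h.isGreatest_odd.unique (heq ▸ h'.isGreatest_odd))
    rw [← Finset.erase_insert h.succ_notMem, heq, Finset.erase_insert h'.succ_notMem]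
  case surjOn =>
    rintro s ⟨hs, a, ha, hao⟩
    have hbdd : BddAbove {x | x ∈ s ∧ Odd x} := s.bddAbove.mono fun _ hx => hx.1
    obtain ⟨c, hc⟩ : ∃ c, IsGreatest {x | x ∈ s ∧ Odd x} c :=
      ⟨_, Nat.sSup_mem ⟨a, ha, hao⟩ hbdd, fun _ hx => le_csSup hbdd hx⟩
    obtain ⟨e, rfl⟩ : ∃ e, c = e + 1 := Nat.exists_eq_add_one.2 hc.1.2.pos
    exact ⟨(e, _), hs.isParityCut_erase_succ hc, Finset.insert_erase hc.1.1⟩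

theorem pedOd_succ_eq_ncard (m : ℕ) {N : ℕ} (hN : Odd N) :
    pedOd m (N + 1) =
      {s ∈ distinctPartitions m N | OddsBelowEvens s ∧ ∃ b ∈ s, Even b}.ncard := by
  have lower := bijOn_insert_isParityCut.subset_right
    (r := {s ∈ distinctPartitions m N | OddsBelowEvens s ∧ ∃ b ∈ s, Even b}) fun _ hs => hs.2
  have upper := bijOn_insert_succ_isParityCut.subset_right
    (r := {s ∈ distinctPartitions m (N + 1) | OddsBelowEvens s ∧ ∃ a ∈ s, Odd a})
    fun _ hs => hs.2
  rw [pedOd_eq_ncard, ← upper.ncard_eq, ← lower.ncard_eq]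
  congr 1
  ext p
  refine and_congr_right fun hp => ?_
  have upper_mem := bijOn_insert_succ_isParityCut.mapsTo hp
  have lower_mem := bijOn_insert_isParityCut.mapsTo hp
  exact (and_iff_left upper_mem).trans <|
    (hp.insert_succ_mem_iff hN).trans (and_iff_left lower_mem).symm

theorem pedOd_eq_ncard_add_Dodd (m : ℕ) {N : ℕ} (hN : Odd N) :
    pedOd m N =
      {s ∈ distinctPartitions m N | OddsBelowEvens s ∧ ∃ b ∈ s, Even b}.ncard + Dodd m N := by
  rw [pedOd_eq_ncard, Dodd_eq_ncard, ← Set.ncard_union_eq ?disjoint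
    ((finite_distinctPartitions m N).subset (Set.sep_subset _ _))
    ((finite_distinctPartitions m N).subset (Set.sep_subset _ _))]
  case disjoint =>
    refine Set.disjoint_left.2 ?_
    rintro s ⟨-, -, b, hb, hbe⟩ ⟨-, hodd⟩
    exact Nat.not_odd_iff_even.2 hbe (hodd b hb)
  congr 1
  ext s
  have exists_odd (hs : s ∈ distinctPartitions m N) : ∃ a ∈ s, Odd a :=
    exists_odd_of_odd_sum (hs.2.2 ▸ hN)
  have oddsBelowEvens (hs : ∀ a ∈ s, Odd a) : OddsBelowEvens s :=
    fun _ _ b hb _ hbe => absurd (hs b hb) (Nat.not_odd_iff_even.2 hbe)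
  have exists_even_or_all_odd : (∃ b ∈ s, Even b) ∨ ∀ a ∈ s, Odd a := by
    simpa only [Nat.not_even_iff_odd, not_exists, not_and] using em (∃ b ∈ s, Even b)
  constructor
  · rintro ⟨hs, hbelow, -⟩
    exact exists_even_or_all_odd.imp (⟨hs, hbelow, ·⟩) (⟨hs, ·⟩)
  · rintro (⟨hs, hbelow, -⟩ | ⟨hs, hodd⟩)
    · exact ⟨hs, hbelow, exists_odd hs⟩
    · exact ⟨hs, oddsBelowEvens hodd, exists_odd hs⟩

theorem pedOd_even_diff (m n : ℕ) (hm : 1 ≤ m) (hn : 1 ≤ n) :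
    (pedOd m (2 * n - 1) : ℤ) - (pedOd m (2 * n) : ℤ) = (Dodd m (2 * n - 1) : ℤ) := by
  have hodd : Odd (2 * n - 1) := ⟨n - 1, by omega⟩
  have lowered := pedOd_succ_eq_ncard m hodd
  rw [show 2 * n - 1 + 1 = 2 * n by omega] at lowered
  rw [pedOd_eq_ncard_add_Dodd m hodd, lowered]
  push_cast
  ring
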